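/- arXiv:2001.08004 — 9 statements merged into one kernel-verified Lean document; each statement's English description precedes it below -/
import Mathlib

section
/- Let b > 0, x₀ < x₁, let w : [x₀,x₁] → ℝ be continuously differentiable, and let ŵ₀, ŵ₁ ∈ ℝ. Then −∫_{x₀}^{x₁} b w(x) w'(x) dx + b w(x₁)(w(x₁) − ŵ₁) − b ŵ₀ (w(x₀) − ŵ₀) = (b/2)(w(x₀) − ŵ₀)² + (b/2)(w(x₁) − ŵ₁)² + (b/2) ŵ₀² − (b/2) ŵ₁². -/
/-- Element-local semi-ellipticity identity of the hybrid dG bilinear form on an element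
`[x₀,x₁]` with flow in positive direction (`b > 0`), tested with itself. -/
theorem stmt_10 (b x₀ x₁ : ℝ) (hb : 0 < b) (hx : x₀ < x₁)
    (w : ℝ → ℝ) (hw : ContDiff ℝ 1 w) (wh₀ wh₁ : ℝ) :
    -(∫ x in x₀..x₁, b * w x * deriv w x)
      + b * w x₁ * (w x₁ - wh₁) - b * wh₀ * (w x₀ - wh₀)
    = b / 2 * (w x₀ - wh₀) ^ 2 + b / 2 * (w x₁ - wh₁) ^ 2
      + b / 2 * wh₀ ^ 2 - b / 2 * wh₁ ^ 2 := by
  have hd : ∀ x, HasDerivAt w (deriv w x) x := fun x =>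
    (hw.differentiable (by norm_num) x).hasDerivAt
  have hc : Continuous (deriv w) := hw.continuous_deriv le_rfl
  have hw0 : Continuous w := hw.continuous
  have key : ∫ x in x₀..x₁, b * w x * deriv w x = b / 2 * w x₁ ^ 2 - b / 2 * w x₀ ^ 2 := by
    refine intervalIntegral.integral_eq_sub_of_hasDerivAt (f := fun x => b / 2 * w x ^ 2) ?_ ?_
    · intro x _
      refine (((hd x).pow 2).const_mul (b / 2)).congr_deriv ?_
      norm_num
      ring
    · exact ((continuous_const.mul hw0).mul hc).intervalIntegrable _ _
  rw [key]
  ring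
end

section
/- Let b > 0, let 0 = x₀ < x₁ < ⋯ < x_M = ℓ be a grid, for each i = 1,…,M let w_i : [x_{i−1},x_i] → ℝ be continuously differentiable, and let ŵ₀, ŵ₁, …, ŵ_M ∈ ℝ with ŵ₀ = 0. Then Σ_{i=1}^M [ −∫_{x_{i−1}}^{x_i} b w_i w_i' dx + b w_i(x_i)(w_i(x_i) − ŵ_i) − b ŵ_{i−1}(w_i(x_{i−1}) − ŵ_{i−1}) ] + b ŵ_M² = (b/2) Σ_{i=1}^M [ (w_i(x_{i−1}) − ŵ_{i−1})² + (w_i(x_i) − ŵ_i)² ] + (b/2) ŵ_M². -/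
/-- Semi-ellipticity identity of the hybrid dG bilinear form on a single edge `[0,ℓ]`
with flow in positive direction (`b > 0`): summing the element-local contributions over
the mesh `0 = x₀ < ⋯ < x_M = ℓ`, with hybrid values `wh i` vanishing at the inflow
vertex, gives the sum of the squared upwind jumps plus the outflow term. -/
theorem stmt_11 (b ℓ : ℝ) (hb : 0 < b) (M : ℕ) (hM : 1 ≤ M) (x : ℕ → ℝ)
    (hx0 : x 0 = 0) (hxM : x M = ℓ) (hmono : ∀ i < M, x i < x (i + 1))
    (w : ℕ → ℝ → ℝ) (hw : ∀ i < M, ContDiff ℝ 1 (w i))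
    (wh : ℕ → ℝ) (hwh0 : wh 0 = 0) :
    (∑ i ∈ Finset.range M,
        (-(∫ y in x i..x (i + 1), b * w i y * deriv (w i) y)
          + b * w i (x (i + 1)) * (w i (x (i + 1)) - wh (i + 1))
          - b * wh i * (w i (x i) - wh i)))
      + b * wh M ^ 2
    = b / 2 * (∑ i ∈ Finset.range M,
        ((w i (x i) - wh i) ^ 2 + (w i (x (i + 1)) - wh (i + 1)) ^ 2))
      + b / 2 * wh M ^ 2 := by
  have key : ∀ i ∈ Finset.range M,
      (-(∫ y in x i..x (i + 1), b * w i y * deriv (w i) y)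
          + b * w i (x (i + 1)) * (w i (x (i + 1)) - wh (i + 1))
          - b * wh i * (w i (x i) - wh i))
      = b / 2 * ((w i (x i) - wh i) ^ 2 + (w i (x (i + 1)) - wh (i + 1)) ^ 2)
        - (b / 2 * wh (i + 1) ^ 2 - b / 2 * wh i ^ 2) := by
    intro i hi
    have hc := hw i (Finset.mem_range.mp hi)
    have hI : (∫ y in x i..x (i + 1), b * w i y * deriv (w i) y)
        = b / 2 * w i (x (i + 1)) ^ 2 - b / 2 * w i (x i) ^ 2 := by
      refine intervalIntegral.integral_eq_sub_of_hasDerivAt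
        (f := fun y => b / 2 * w i y ^ 2) ?_ ?_
      · intro y _
        have hd : HasDerivAt (w i) (deriv (w i) y) y :=
          (hc.differentiable one_ne_zero y).hasDerivAt
        have h2 := (hd.pow 2).const_mul (b / 2)
        refine h2.congr_deriv ?_
        norm_num
        ring
      · apply Continuous.intervalIntegrable
        exact (continuous_const.mul hc.continuous).mul (hc.continuous_deriv le_rfl)
    rw [hI]
    ring
  rw [Finset.sum_congr rfl key, Finset.sum_sub_distrib, ← Finset.mul_sum,
    Finset.sum_range_sub (fun i => b / 2 * wh i ^ 2), hwh0]
  ring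
end

section
/- Let b > 0, T > 0, let a : [0,ℓ] → ℝ be continuous with a > 0, let 0 = x₀ < ⋯ < x_M = ℓ be a grid, and let u : [0,ℓ] × [0,T] → ℝ be continuously differentiable with a(x) ∂_t u + b ∂_x u = 0. Then for every t ∈ [0,T], every choice of continuously differentiable test functions w_i : [x_{i−1},x_i] → ℝ (i = 1,…,M), and every ŵ₀,…,ŵ_M ∈ ℝ with ŵ₀ = 0: Σ_{i=1}^M [ ∫_{x_{i−1}}^{x_i} a(x) ∂_t u(x,t) w_i(x) dx − ∫_{x_{i−1}}^{x_i} b u(x,t) w_i'(x) dx + b u(x_i,t)(w_i(x_i) − ŵ_i) − b u(x_{i−1},t)(w_i(x_{i−1}) − ŵ_{i−1}) ] + b u(ℓ,t) ŵ_M = 0. -/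
/-- Consistency of the hybrid dG method on a single edge `[0,ℓ]` with flow in positive
direction (`b > 0`): a classical solution of `a(x) ∂ₜu + b ∂ₓu = 0`, with hybrid values
taken as its nodal traces, satisfies the discrete variational identity for all element
test functions `w i` and hybrid test values `wh` vanishing at the inflow vertex. -/
theorem stmt_12 (b ℓ T : ℝ) (hb : 0 < b) (hT : 0 < T)
    (a : ℝ → ℝ) (ha : ContinuousOn a (Set.Icc 0 ℓ))
    (hapos : ∀ y ∈ Set.Icc 0 ℓ, 0 < a y)
    (M : ℕ) (hM : 1 ≤ M) (x : ℕ → ℝ) (hx0 : x 0 = 0) (hxM : x M = ℓ)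
    (hmono : ∀ i < M, x i < x (i + 1))
    (u : ℝ → ℝ → ℝ) (hu : ContDiff ℝ 1 (fun p : ℝ × ℝ => u p.1 p.2))
    (hpde : ∀ y ∈ Set.Icc 0 ℓ, ∀ t ∈ Set.Icc 0 T,
      a y * deriv (fun s => u y s) t + b * deriv (fun z => u z t) y = 0) :
    ∀ t ∈ Set.Icc 0 T, ∀ w : ℕ → ℝ → ℝ, (∀ i < M, ContDiff ℝ 1 (w i)) →
      ∀ wh : ℕ → ℝ, wh 0 = 0 →
      (∑ i ∈ Finset.range M,
          ((∫ y in x i..x (i + 1), a y * deriv (fun s => u y s) t * w i y)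
            - (∫ y in x i..x (i + 1), b * u y t * deriv (w i) y)
            + b * u (x (i + 1)) t * (w i (x (i + 1)) - wh (i + 1))
            - b * u (x i) t * (w i (x i) - wh i)))
        + b * u ℓ t * wh M = 0 := by
  intro t ht w hw wh hwh
  have hle : ∀ j, j ≤ M → ∀ i, i ≤ j → x i ≤ x j := by
    intro j
    induction j with
    | zero =>
      intro _ i hi
      rw [Nat.le_zero.mp hi]
    | succ k ih =>
      intro hk i hi
      rcases Nat.lt_or_ge i (k + 1) with h | h
      · exact (ih (by omega) i (by omega)).trans (hmono k (by omega)).le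
      · rw [le_antisymm hi h]
  have hv : ContDiff ℝ 1 (fun z => u z t) :=
    hu.comp (contDiff_id.prodMk contDiff_const)
  have key : ∀ i ∈ Finset.range M,
      ((∫ y in x i..x (i + 1), a y * deriv (fun s => u y s) t * w i y)
            - (∫ y in x i..x (i + 1), b * u y t * deriv (w i) y)
            + b * u (x (i + 1)) t * (w i (x (i + 1)) - wh (i + 1))
            - b * u (x i) t * (w i (x i) - wh i))
        = -(b * u (x (i + 1)) t * wh (i + 1)) - -(b * u (x i) t * wh i) := by
    intro i hi
    have hiM := Finset.mem_range.mp hi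
    have hwi := hw i hiM
    have h0 : 0 ≤ x i := hx0 ▸ hle i hiM.le 0 (Nat.zero_le _)
    have h1 : x (i + 1) ≤ ℓ := hxM ▸ hle M le_rfl (i + 1) hiM
    have e1 : (∫ y in x i..x (i + 1), a y * deriv (fun s => u y s) t * w i y)
        = ∫ y in x i..x (i + 1), -b * (deriv (fun z => u z t) y * w i y) := by
      apply intervalIntegral.integral_congr
      intro y hy
      rw [Set.uIcc_of_le (hmono i hiM).le] at hy
      have := hpde y ⟨h0.trans hy.1, hy.2.trans h1⟩ t ht
      show a y * deriv (fun s => u y s) t * w i y = -b * (deriv (fun z => u z t) y * w i y)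
      linear_combination w i y * this
    have e2 : (∫ y in x i..x (i + 1), b * u y t * deriv (w i) y)
        = b * ∫ y in x i..x (i + 1), u y t * deriv (w i) y := by
      rw [← intervalIntegral.integral_const_mul]
      simp only [mul_assoc]
    have e3 := intervalIntegral.integral_mul_deriv_eq_deriv_mul (a := x i) (b := x (i + 1))
      (u := fun z => u z t) (v := w i) (u' := deriv (fun z => u z t)) (v' := deriv (w i))
      (fun y _ => (hv.differentiable one_ne_zero y).hasDerivAt)
      (fun y _ => (hwi.differentiable one_ne_zero y).hasDerivAt)
      ((hv.continuous_deriv le_rfl).intervalIntegrable _ _)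
      ((hwi.continuous_deriv le_rfl).intervalIntegrable _ _)
    rw [e1, e2, intervalIntegral.integral_const_mul]
    linear_combination (-b) * e3
  rw [Finset.sum_congr rfl key,
    Finset.sum_range_sub (fun i => -(b * u (x i) t * wh i)), hwh, hxM]
  ring
end

section
/- Let k ≥ 1, x₀ < x₁, and let f : [x₀,x₁] → ℝ be continuous. Then there exists a unique polynomial p of degree at most k such that p(x₁) = f(x₁) and ∫_{x₀}^{x₁} (f(x) − p(x)) q(x) dx = 0 for every polynomial q of degree at most k−1. -/
open Polynomial in
theorem aux_inj (x₀ x₁ : ℝ) (hx : x₀ < x₁) (s : Polynomial ℝ)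
    (h : ∫ x in x₀..x₁, (x₁ - x) * s.eval x * s.eval x = 0) : s = 0 := by
  by_contra hs
  have hex : ∃ c ∈ Set.Ioo x₀ x₁, s.eval c ≠ 0 := by
    by_contra! hc
    exact hs (Polynomial.eq_zero_of_infinite_isRoot s
      ((Set.Ioo_infinite hx).mono fun c hcm => hc c hcm))
  obtain ⟨c, hc, hne⟩ := hex
  have := intervalIntegral.integral_pos (f := fun x => (x₁ - x) * s.eval x * s.eval x) hx
    (by fun_prop)
    (fun x hxm => by
      rw [mul_assoc]
      exact mul_nonneg (by linarith [hxm.2]) (mul_self_nonneg _))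
    ⟨c, ⟨hc.1.le, hc.2.le⟩, by
      rw [mul_assoc]
      exact mul_pos (by linarith [hc.2]) (mul_self_pos.mpr hne)⟩
  linarith

open Polynomial in
noncomputable def auxB (x₀ x₁ : ℝ) (k : ℕ) :
    degreeLT ℝ k →ₗ[ℝ] degreeLT ℝ k →ₗ[ℝ] ℝ :=
  LinearMap.mk₂ ℝ (fun r q => ∫ x in x₀..x₁, (x₁ - x) * (r : ℝ[X]).eval x * (q : ℝ[X]).eval x)
    (fun a b c => by
      rw [← intervalIntegral.integral_add]
      · congr 1; ext x; simp; ring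
      · exact Continuous.intervalIntegrable (by fun_prop) _ _
      · exact Continuous.intervalIntegrable (by fun_prop) _ _)
    (fun t a b => by
      rw [← intervalIntegral.integral_smul]
      congr 1; ext x; simp; ring)
    (fun a b c => by
      rw [← intervalIntegral.integral_add]
      · congr 1; ext x; simp; ring
      · exact Continuous.intervalIntegrable (by fun_prop) _ _
      · exact Continuous.intervalIntegrable (by fun_prop) _ _)
    (fun t a b => by
      rw [← intervalIntegral.integral_smul]
      congr 1; ext x; simp; ring)

open Polynomial in
theorem auxB_surj (x₀ x₁ : ℝ) (hx : x₀ < x₁) (k : ℕ) :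
    Function.Surjective (auxB x₀ x₁ k) := by
  have : FiniteDimensional ℝ (degreeLT ℝ k) :=
    (degreeLTEquiv ℝ k).symm.finiteDimensional
  have hfr : Module.finrank ℝ (degreeLT ℝ k) = Module.finrank ℝ (degreeLT ℝ k →ₗ[ℝ] ℝ) :=
    (Subspace.dual_finrank_eq (K := ℝ) (V := degreeLT ℝ k)).symm
  refine (LinearMap.injective_iff_surjective_of_finrank_eq_finrank hfr).1 ?_
  rw [injective_iff_map_eq_zero]
  intro a ha
  have h := LinearMap.congr_fun ha a
  exact Subtype.ext (aux_inj x₀ x₁ hx a h)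

open Polynomial in
theorem aux_deg (k : ℕ) (hk : 1 ≤ k) (q : ℝ[X]) : q ∈ degreeLT ℝ k ↔ q.natDegree ≤ k - 1 := by
  rw [mem_degreeLT]
  by_cases hq : q = 0
  · simp [hq]
  · rw [← natDegree_lt_iff_degree_lt hq]
    omega

/-- Well-definedness of the special projection used in the hybrid dG convergence proof:
for continuous `f` on `[x₀,x₁]` there is a unique polynomial `p` of degree at most `k`
matching `f` at the outflow endpoint `x₁` and such that `f − p` is L²-orthogonal to all
polynomials of degree at most `k − 1`. -/
theorem stmt_13 (k : ℕ) (hk : 1 ≤ k) (x₀ x₁ : ℝ) (hx : x₀ < x₁)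
    (f : ℝ → ℝ) (hf : ContinuousOn f (Set.Icc x₀ x₁)) :
    ∃! p : Polynomial ℝ, p.natDegree ≤ k ∧ Polynomial.eval x₁ p = f x₁ ∧
      ∀ q : Polynomial ℝ, q.natDegree ≤ k - 1 →
        ∫ x in x₀..x₁, (f x - Polynomial.eval x p) * Polynomial.eval x q = 0 := by
  have hfi : ∀ q : Polynomial ℝ, IntervalIntegrable (fun x => (f x₁ - f x) * q.eval x)
      MeasureTheory.volume x₀ x₁ := fun q => by
    apply ContinuousOn.intervalIntegrable
    rw [Set.uIcc_of_le hx.le]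
    fun_prop
  have hpi : ∀ p q : Polynomial ℝ, IntervalIntegrable (fun x => (f x - p.eval x) * q.eval x)
      MeasureTheory.volume x₀ x₁ := fun p q => by
    apply ContinuousOn.intervalIntegrable
    rw [Set.uIcc_of_le hx.le]
    fun_prop
  let F : Polynomial.degreeLT ℝ k →ₗ[ℝ] ℝ :=
    { toFun := fun q => ∫ x in x₀..x₁, (f x₁ - f x) * (q : Polynomial ℝ).eval x
      map_add' := fun a b => by
        rw [← intervalIntegral.integral_add (hfi _) (hfi _)]
        congr 1; ext x; simp; ring
      map_smul' := fun t a => by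
        rw [← intervalIntegral.integral_smul]
        congr 1; ext x; simp; ring }
  obtain ⟨r, hr⟩ := auxB_surj x₀ x₁ hx k F
  have hrd := (aux_deg k hk r).1 r.2
  refine existsUnique_of_exists_of_unique
    ⟨Polynomial.C (f x₁) + (Polynomial.X - Polynomial.C x₁) * (r : Polynomial ℝ), ?_, by simp, ?_⟩ ?_
  · refine (Polynomial.natDegree_C_add).le.trans (Polynomial.natDegree_mul_le.trans ?_)
    rw [Polynomial.natDegree_X_sub_C]
    omega
  · intro q hq
    have h := LinearMap.congr_fun hr ⟨q, (aux_deg k hk q).2 hq⟩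
    change (∫ x in x₀..x₁, (x₁ - x) * (r : Polynomial ℝ).eval x * q.eval x) =
      ∫ x in x₀..x₁, (f x₁ - f x) * q.eval x at h
    rw [← sub_eq_zero, ← intervalIntegral.integral_sub
      (Continuous.intervalIntegrable (by fun_prop) _ _) (hfi q)] at h
    rw [← h]
    congr 1; ext x; simp; ring
  · rintro p p' ⟨hpd, hpe, hpo⟩ ⟨hpd', hpe', hpo'⟩
    have hroot : (p' - p).IsRoot x₁ := by simp [Polynomial.IsRoot, hpe, hpe']
    obtain ⟨s, hs⟩ := Polynomial.dvd_iff_isRoot.2 hroot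
    have hs0 : s = 0 := by
      by_contra hne
      have hd : (p' - p).natDegree ≤ k := (Polynomial.natDegree_sub_le _ _).trans (max_le hpd' hpd)
      rw [hs, Polynomial.natDegree_mul (Polynomial.X_sub_C_ne_zero x₁) hne,
        Polynomial.natDegree_X_sub_C] at hd
      have hsd : s.natDegree ≤ k - 1 := by omega
      refine hne (aux_inj x₀ x₁ hx s ?_)
      have h : (∫ x in x₀..x₁, (f x - p'.eval x) * s.eval x) -
          ∫ x in x₀..x₁, (f x - p.eval x) * s.eval x = 0 := by
        rw [hpo s hsd, hpo' s hsd, sub_zero]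
      rw [← intervalIntegral.integral_sub (hpi _ _) (hpi _ _)] at h
      rw [← h]
      congr 1; ext x
      have hx' := congrArg (Polynomial.eval x) hs
      simp only [Polynomial.eval_sub, Polynomial.eval_mul, Polynomial.eval_X,
        Polynomial.eval_C] at hx'
      linear_combination (s.eval x) * hx'
    rw [hs0, mul_zero, sub_eq_zero] at hs
    exact hs.symm
end

section
/- Let b > 0, T > 0, k ≥ 0, let a : [0,ℓ] → ℝ be continuous with a > 0, let 0 = x₀ < ⋯ < x_M = ℓ be a grid, let g : [0,T] → ℝ be continuous, and for i = 1,…,M let u_i : [x_{i−1},x_i] × [0,T] → ℝ be continuously differentiable in t with u_i(·,t) a polynomial of degree ≤ k in x for each t. Define hybrid values û₀(t) = g(t) and û_i(t) = u_i(x_i,t) for i = 1,…,M−1, and assume the discrete scheme holds: for each i, each t, and every polynomial w of degree ≤ k, ∫_{x_{i−1}}^{x_i} a ∂_t u_i(x,t) w(x) dx − ∫_{x_{i−1}}^{x_i} b u_i(x,t) w'(x) dx + b u_i(x_i,t) w(x_i) − b û_{i−1}(t) w(x_{i−1}) = 0. Then for all t ∈ [0,T]: (1/2) d/dt Σ_{i=1}^M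 ∫_{x_{i−1}}^{x_i} a(x) u_i(x,t)² dx + (b/2) Σ_{i=1}^M (u_i(x_{i−1},t) − û_{i−1}(t))² + (b/2) u_M(ℓ,t)² = (b/2) g(t)². -/
open MeasureTheory in
theorem aux_energy (n : ℕ) (p q t : ℝ) (a : ℝ → ℝ) (ha : ContinuousOn a (Set.uIcc p q))
    (c : ℕ → ℝ → ℝ) (c' : ℕ → ℝ) (L : ℕ → ℝ → ℝ) (hL : ∀ j, Continuous (L j))
    (hc : ∀ j, HasDerivAt (c j) (c' j) t) :
    HasDerivAt (fun s => ∫ y in p..q, a y * (∑ j ∈ Finset.range n, c j s * L j y) ^ 2)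
      (2 * ∫ y in p..q, a y * (∑ j ∈ Finset.range n, c' j * L j y) *
        (∑ j ∈ Finset.range n, c j t * L j y)) t := by
  have key : ∀ d e : ℕ → ℝ, (∫ y in p..q, a y * (∑ j ∈ Finset.range n, d j * L j y) *
        (∑ j ∈ Finset.range n, e j * L j y)) =
      ∑ j ∈ Finset.range n, ∑ l ∈ Finset.range n, d j * e l * ∫ y in p..q, a y * L j y * L l y := by
    intro d e
    have hint : ∀ j l, IntervalIntegrable (fun y => d j * e l * (a y * L j y * L l y)) volume p q := by
      intro j l
      apply ContinuousOn.intervalIntegrable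
      exact continuousOn_const.mul ((ha.mul (hL j).continuousOn).mul (hL l).continuousOn)
    simp_rw [← intervalIntegral.integral_const_mul]
    rw [← Finset.sum_congr rfl
      (fun j _ => intervalIntegral.integral_finsetSum (fun l _ => hint j l))]
    rw [← intervalIntegral.integral_finsetSum]
    · congr 1
      ext y
      rw [mul_assoc, Finset.sum_mul_sum, Finset.mul_sum]
      refine Finset.sum_congr rfl fun j _ => ?_
      rw [Finset.mul_sum]
      refine Finset.sum_congr rfl fun l _ => ?_
      ring
    · intro j _
      apply ContinuousOn.intervalIntegrable
      exact continuousOn_finset_sum _ fun l _ =>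
        continuousOn_const.mul ((ha.mul (hL j).continuousOn).mul (hL l).continuousOn)
  have h1 : ∀ s, (∫ y in p..q, a y * (∑ j ∈ Finset.range n, c j s * L j y) ^ 2) =
      ∑ j ∈ Finset.range n, ∑ l ∈ Finset.range n,
        c j s * c l s * ∫ y in p..q, a y * L j y * L l y := by
    intro s
    rw [← key (fun j => c j s) (fun j => c j s)]
    congr 1; ext y; ring
  have h2 := key c' (fun j => c j t)
  have h3 := key (fun j => c j t) c'
  have h4 : (∫ y in p..q, a y * (∑ j ∈ Finset.range n, c j t * L j y) *
        (∑ j ∈ Finset.range n, c' j * L j y)) = ∫ y in p..q, a y *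
        (∑ j ∈ Finset.range n, c' j * L j y) * (∑ j ∈ Finset.range n, c j t * L j y) := by
    congr 1; ext y; ring
  simp_rw [h1]
  rw [two_mul]
  nth_rewrite 2 [← h4]
  rw [h2, h3, ← Finset.sum_add_distrib]
  simp_rw [← Finset.sum_add_distrib]
  refine HasDerivAt.fun_sum fun j _ => HasDerivAt.fun_sum fun l _ => ?_
  have := ((hc j).mul (hc l)).mul_const (∫ y in p..q, a y * L j y * L l y)
  refine this.congr_deriv ?_
  ring

theorem aux_poly (p q : ℝ) (P : Polynomial ℝ) :
    ∫ y in p..q, P.eval y * P.derivative.eval y = (P.eval q ^ 2 - P.eval p ^ 2) / 2 := by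
  have h := intervalIntegral.integral_eq_sub_of_hasDerivAt (a := p) (b := q)
    (f := fun y => P.eval y ^ 2 / 2) (f' := fun y => P.eval y * P.derivative.eval y)
    (fun y _ => by
      have := ((P.hasDerivAt y).pow 2).div_const 2
      refine this.congr_deriv ?_
      simp; ring)
    (Continuous.intervalIntegrable (by fun_prop) _ _)
  rw [h]; ring

theorem aux_interp (k : ℕ) (P : Polynomial ℝ) (hP : P.natDegree ≤ k) (y : ℝ) :
    P.eval y = ∑ j ∈ Finset.range (k + 1), P.eval (j : ℝ) *
      (Lagrange.basis (Finset.range (k + 1)) (fun j : ℕ => (j : ℝ)) j).eval y := by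
  have h := Lagrange.eq_interpolate (s := Finset.range (k + 1)) (v := fun j : ℕ => (j : ℝ))
    (f := P) (fun i _ j _ h => Nat.cast_injective h) (by
      rw [Finset.card_range]
      exact lt_of_le_of_lt Polynomial.degree_le_natDegree (by exact_mod_cast Nat.lt_succ_of_le hP))
  conv_lhs => rw [h]
  rw [Lagrange.interpolate_apply, Polynomial.eval_finsetSum]
  simp

/-- Discrete energy identity for the hybrid dG semi-discretization of the transport
equation on a single edge `[0,ℓ]` with flow in positive direction (`b > 0`) and inflow
data `g`: the energy dissipation consists of the upwind jump terms and the outflow term,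
balanced by the inflow source `(b/2) g²`. The hybrid values are `g t` at the inflow
vertex and the upwind traces `u (i-1) (x i) t` at the interior grid points. -/
theorem stmt_14 (b ℓ T : ℝ) (hb : 0 < b) (hT : 0 < T) (k : ℕ)
    (a : ℝ → ℝ) (ha : ContinuousOn a (Set.Icc 0 ℓ))
    (hapos : ∀ y ∈ Set.Icc 0 ℓ, 0 < a y)
    (M : ℕ) (hM : 1 ≤ M) (x : ℕ → ℝ) (hx0 : x 0 = 0) (hxM : x M = ℓ)
    (hmono : ∀ i < M, x i < x (i + 1))
    (g : ℝ → ℝ) (hg : ContinuousOn g (Set.Icc 0 T))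
    (u : ℕ → ℝ → ℝ → ℝ)
    (hsm : ∀ i < M, ∀ y, ContDiff ℝ 1 (fun t => u i y t))
    (hpoly : ∀ i < M, ∀ t, ∃ p : Polynomial ℝ,
      p.natDegree ≤ k ∧ ∀ y, u i y t = Polynomial.eval y p)
    (hscheme : ∀ t ∈ Set.Icc 0 T, ∀ i < M, ∀ w : Polynomial ℝ, w.natDegree ≤ k →
      (∫ y in x i..x (i + 1), a y * deriv (fun s => u i y s) t * Polynomial.eval y w)
        - (∫ y in x i..x (i + 1), b * u i y t * Polynomial.eval y (Polynomial.derivative w))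
        + b * u i (x (i + 1)) t * Polynomial.eval (x (i + 1)) w
        - b * (if i = 0 then g t else u (i - 1) (x i) t) * Polynomial.eval (x i) w = 0) :
    ∀ t ∈ Set.Icc 0 T,
      HasDerivAt
        (fun s => (1 / 2 : ℝ) * ∑ i ∈ Finset.range M,
          ∫ y in x i..x (i + 1), a y * u i y s ^ 2)
        (b / 2 * g t ^ 2
          - b / 2 * ∑ i ∈ Finset.range M,
              (u i (x i) t - (if i = 0 then g t else u (i - 1) (x i) t)) ^ 2
          - b / 2 * u (M - 1) ℓ t ^ 2) t := by
  intro t ht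
  have hxle : ∀ j ≤ M, ∀ i ≤ j, x i ≤ x j := by
    intro j
    induction j with
    | zero => intro _ i hi; rw [Nat.le_zero.mp hi]
    | succ j ih =>
      intro hj i hi
      rcases Nat.lt_or_ge i (j + 1) with h | h
      · exact (ih (by omega) i (by omega)).trans (hmono j (by omega)).le
      · rw [le_antisymm hi h]
  let L : ℕ → ℝ → ℝ := fun j y =>
    (Lagrange.basis (Finset.range (k + 1)) (fun j : ℕ => (j : ℝ)) j).eval y
  have hu : ∀ i < M, ∀ y s, u i y s = ∑ j ∈ Finset.range (k + 1), u i j s * L j y := by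
    intro i hi y s
    obtain ⟨p, hp, he⟩ := hpoly i hi s
    simp_rw [he]
    exact aux_interp k p hp y
  let F : ℕ → ℝ := fun i => (if i = 0 then g t else u (i - 1) (x i) t) ^ 2
  have hloc : ∀ i < M, HasDerivAt (fun s => ∫ y in x i..x (i + 1), a y * u i y s ^ 2)
      (b * (F i - F (i + 1)) -
        b * (u i (x i) t - (if i = 0 then g t else u (i - 1) (x i) t)) ^ 2) t := by
    intro i hi
    have hc : ∀ y, HasDerivAt (fun s => u i y s) (deriv (fun s => u i y s) t) t := fun y =>
      ((hsm i hi y).differentiable one_ne_zero t).hasDerivAt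
    have hd : ∀ y, deriv (fun s => u i y s) t =
        ∑ j ∈ Finset.range (k + 1), deriv (fun s => u i j s) t * L j y := by
      intro y
      have h : HasDerivAt (fun s => ∑ j ∈ Finset.range (k + 1), u i j s * L j y)
          (∑ j ∈ Finset.range (k + 1), deriv (fun s => u i j s) t * L j y) t :=
        HasDerivAt.fun_sum fun j _ => (hc j).mul_const _
      rw [← h.deriv]
      congr 1; ext s; exact hu i hi y s
    have ha' : ContinuousOn a (Set.uIcc (x i) (x (i + 1))) := by
      apply ha.mono
      rw [Set.uIcc_of_le (hmono i hi).le]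
      apply Set.Icc_subset_Icc
      · rw [← hx0]; exact hxle i hi.le 0 (Nat.zero_le _)
      · rw [← hxM]; exact hxle M le_rfl (i + 1) hi
    have hE := aux_energy (k + 1) (x i) (x (i + 1)) t a ha' (fun j s => u i j s)
      (fun j => deriv (fun s => u i j s) t) L
      (fun j => Polynomial.continuous _) (fun j => hc j)
    simp_rw [← hu i hi, ← hd] at hE
    obtain ⟨p, hp, he⟩ := hpoly i hi t
    have hs := hscheme t ht i hi p hp
    have hI : (∫ y in x i..x (i + 1), b * u i y t * Polynomial.eval y (Polynomial.derivative p))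
        = b * ((u i (x (i + 1)) t ^ 2 - u i (x i) t ^ 2) / 2) := by
      rw [he, he, ← aux_poly, ← intervalIntegral.integral_const_mul]
      congr 1; ext y; rw [he]; ring
    rw [hI] at hs
    simp_rw [← he] at hs
    refine hE.congr_deriv ?_
    have hF : F (i + 1) = u i (x (i + 1)) t ^ 2 := by simp [F]
    rw [hF]
    simp only [F]
    linear_combination 2 * hs
  have hsum := (HasDerivAt.fun_sum (u := Finset.range M)
    (fun i hi => hloc i (Finset.mem_range.mp hi))).const_mul (1 / 2 : ℝ)
  refine hsum.congr_deriv ?_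
  rw [Finset.sum_sub_distrib, ← Finset.mul_sum, ← Finset.mul_sum, Finset.sum_range_sub']
  have hF0 : F 0 = g t ^ 2 := by simp [F]
  have hFM : F M = u (M - 1) ℓ t ^ 2 := by
    simp only [F, hxM]; rw [if_neg (by omega)]
  rw [hF0, hFM]
  ring
end

section
/- Consider a directed network: finite vertex set V, finite edge set E, each edge e with a start and an end vertex in V (incidence n^e(v) = −1 at the start, +1 at the end, 0 otherwise) and length ℓ^e > 0, continuous a^e : [0,ℓ^e] → ℝ with a^e ≥ a₀ > 0, and constant b^e ≠ 0; assume flow conservation Σ_{e∈E(v)} b^e n^e(v) = 0 at every inner vertex v ∈ V₀. Let (u^e, û^v) be a classical solution of the network transport problem on [0,T]. Then for all t ∈ [0,T]: d/dt Σ_{e∈E} ∫_0^{ℓ^e} a^e(x) u^e(x,t) dx = −Σ_{v∈V_∂} Σ_{e∈E(v)} b^e n^e(v) u^e(v,t), i.e. the total mass changes only through the fluxes at the boundary vertices. -/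
open Finset

/-- Incidence of edge `e` at vertex `v`: `+1` at the end vertex, `−1` at the start
vertex, `0` otherwise. -/
def incid {V E : Type*} [DecidableEq V] (src tgt : E → V) (e : E) (v : V) : ℝ :=
  (if tgt e = v then (1 : ℝ) else 0) - (if src e = v then (1 : ℝ) else 0)

/-- The set `E(v)` of edges incident to the vertex `v`. -/
def edgesAt {V E : Type*} [DecidableEq V] [Fintype E] (src tgt : E → V) (v : V) :
    Finset E :=
  Finset.univ.filter fun e => src e = v ∨ tgt e = v

/-- The inner vertices `V₀ = {v : |E(v)| ≥ 2}`. -/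
def innerV {V E : Type*} [DecidableEq V] [Fintype V] [Fintype E] (src tgt : E → V) :
    Finset V :=
  Finset.univ.filter fun v => 2 ≤ (edgesAt src tgt v).card

/-- The boundary vertices `V_∂ = V \ V₀`. -/
def bdryV {V E : Type*} [DecidableEq V] [Fintype V] [Fintype E] (src tgt : E → V) :
    Finset V :=
  Finset.univ.filter fun v => (edgesAt src tgt v).card < 2

/-- The edges `E_in(v)` producing flow into the vertex `v`. -/
noncomputable def einEdges {V E : Type*} [DecidableEq V] [Fintype E]
    (src tgt : E → V) (b : E → ℝ) (v : V) : Finset E :=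
  (edgesAt src tgt v).filter fun e => 0 < b e * incid src tgt e v

/-- The edges `E_out(v)` producing flow out of the vertex `v`. -/
noncomputable def eoutEdges {V E : Type*} [DecidableEq V] [Fintype E]
    (src tgt : E → V) (b : E → ℝ) (v : V) : Finset E :=
  (edgesAt src tgt v).filter fun e => b e * incid src tgt e v < 0

/-- The inflow boundary vertices `V_∂^in`. -/
noncomputable def inflowBdry {V E : Type*} [DecidableEq V] [Fintype V] [Fintype E]
    (src tgt : E → V) (b : E → ℝ) : Finset V :=
  (bdryV src tgt).filter fun v =>
    ∃ e ∈ edgesAt src tgt v, b e * incid src tgt e v < 0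

/-- The outflow boundary vertices `V_∂^out`. -/
noncomputable def outflowBdry {V E : Type*} [DecidableEq V] [Fintype V] [Fintype E]
    (src tgt : E → V) (b : E → ℝ) : Finset V :=
  (bdryV src tgt).filter fun v =>
    ∃ e ∈ edgesAt src tgt v, 0 < b e * incid src tgt e v

/-- The trace `u^e(v,t)` of the edge function `u e` at the vertex `v`:
`u e (ℓ e) t` if `v` is the end vertex of `e` and `u e 0 t` otherwise. -/
def vtxTrace {V E : Type*} [DecidableEq V] (tgt : E → V) (ℓ : E → ℝ)
    (u : E → ℝ → ℝ → ℝ) (e : E) (v : V) (t : ℝ) : ℝ :=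
  if tgt e = v then u e (ℓ e) t else u e 0 t

/-- Mass balance on a single edge. -/
theorem edge_mass_aux (l : ℝ) (hl : 0 < l) (a : ℝ → ℝ) (b : ℝ)
    (ha : ContinuousOn a (Set.Icc 0 l)) (u : ℝ → ℝ → ℝ)
    (hu : ContDiff ℝ 1 (fun p : ℝ × ℝ => u p.1 p.2)) (t : ℝ)
    (hpde : ∀ y ∈ Set.Icc 0 l,
      a y * deriv (fun s => u y s) t + b * deriv (fun z => u z t) y = 0) :
    HasDerivAt (fun s => ∫ y in (0 : ℝ)..l, a y * u y s) (-(b * (u l t - u 0 t))) t := by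
  set F : ℝ × ℝ → ℝ := fun p => u p.1 p.2 with hF
  have hd : Differentiable ℝ F := hu.differentiable (by norm_num)
  have hc : Continuous (fderiv ℝ F) := hu.continuous_fderiv (by norm_num)
  have ht : ∀ y s, HasDerivAt (fun s => u y s) (fderiv ℝ F (y, s) (0, 1)) s := by
    intro y s
    exact (hd (y, s)).hasFDerivAt.comp_hasDerivAt s
      ((hasDerivAt_const s y).prodMk (hasDerivAt_id s))
  have hx : ∀ y s, HasDerivAt (fun z => u z s) (fderiv ℝ F (y, s) (1, 0)) y := by
    intro y s
    exact HasFDerivAt.comp_hasDerivAt (f := fun z : ℝ => (z, s)) y (hd (y, s)).hasFDerivAt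
      ((hasDerivAt_id y).prodMk (hasDerivAt_const y s))
  have hct : Continuous (fun p : ℝ × ℝ => fderiv ℝ F p (0, 1)) := hc.clm_apply continuous_const
  have hcx : Continuous (fun p : ℝ × ℝ => fderiv ℝ F p (1, 0)) := hc.clm_apply continuous_const
  have hI : Set.uIcc 0 l = Set.Icc 0 l := Set.uIcc_of_le hl.le
  have hint : ∀ f : ℝ → ℝ, Continuous f →
      IntervalIntegrable (fun y => a y * f y) MeasureTheory.volume 0 l := by
    intro f hf
    apply ContinuousOn.intervalIntegrable
    rw [hI]
    exact ha.mul hf.continuousOn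
  have hcu : ∀ s, Continuous (fun y => u y s) := fun s =>
    hu.continuous.comp (by fun_prop : Continuous fun y : ℝ => (y, s))
  obtain ⟨A, hA⟩ := isCompact_Icc.exists_bound_of_continuousOn ha
  obtain ⟨C, hC⟩ := ((isCompact_Icc (a := (0:ℝ)) (b := l)).prod
    (isCompact_Icc (a := t - 1) (b := t + 1))).exists_bound_of_continuousOn hct.continuousOn
  have key := (intervalIntegral.hasDerivAt_integral_of_dominated_loc_of_deriv_le
    (μ := MeasureTheory.volume) (a := 0) (b := l) (x₀ := t) (s := Set.Icc (t - 1) (t + 1))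
    (F := fun s y => a y * u y s) (F' := fun s y => a y * fderiv ℝ F (y, s) (0, 1))
    (bound := fun _ => A * C)
    (Icc_mem_nhds (by linarith) (by linarith))
    (Filter.Eventually.of_forall fun s => (hint _ (hcu s)).def'.aestronglyMeasurable)
    (hint _ (hcu t))
    ((hint (fun y => fderiv ℝ F (y, t) (0, 1))
      (hct.comp (by fun_prop : Continuous fun y : ℝ => (y, t)))).def'.aestronglyMeasurable)
    (Filter.Eventually.of_forall fun y hy s hs => by
      have hy' : y ∈ Set.Icc 0 l := by
        rw [← hI]; exact Set.uIoc_subset_uIcc hy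
      rw [norm_mul]
      exact mul_le_mul (hA y hy') (hC (y, s) ⟨hy', hs⟩) (norm_nonneg _)
        ((norm_nonneg _).trans (hA y hy')))
    intervalIntegrable_const
    (Filter.Eventually.of_forall fun y _ s _ => (ht y s).const_mul (a y))).2
  refine HasDerivAt.congr_deriv key ?_
  have h1 : ∫ y in (0:ℝ)..l, a y * fderiv ℝ F (y, t) (0, 1)
      = ∫ y in (0:ℝ)..l, (-b) * fderiv ℝ F (y, t) (1, 0) := by
    apply intervalIntegral.integral_congr
    intro y hy
    rw [hI] at hy
    have := hpde y hy
    rw [(ht y t).deriv, (hx y t).deriv] at this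
    show a y * fderiv ℝ F (y, t) (0, 1) = (-b) * fderiv ℝ F (y, t) (1, 0)
    linarith
  rw [h1, intervalIntegral.integral_const_mul,
    intervalIntegral.integral_eq_sub_of_hasDerivAt (fun y _ => hx y t)
      ((hcx.comp (by fun_prop : Continuous fun y : ℝ => (y, t))).intervalIntegrable 0 l)]
  ring

/-- Conservation of mass for transport on a network: for a classical solution of the
network transport problem, the total mass changes only through the fluxes at the
boundary vertices. -/
theorem stmt_15 {V E : Type*} [Fintype V] [Fintype E] [DecidableEq V] [DecidableEq E]
    (src tgt : E → V) (hloop : ∀ e, src e ≠ tgt e)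
    (ℓ : E → ℝ) (hℓ : ∀ e, 0 < ℓ e)
    (a : E → ℝ → ℝ) (a₀ : ℝ) (ha₀ : 0 < a₀)
    (ha : ∀ e, ContinuousOn (a e) (Set.Icc 0 (ℓ e)))
    (haa : ∀ e, ∀ y ∈ Set.Icc 0 (ℓ e), a₀ ≤ a e y)
    (b : E → ℝ) (hb : ∀ e, b e ≠ 0)
    (hcons : ∀ v ∈ innerV src tgt,
      ∑ e ∈ edgesAt src tgt v, b e * incid src tgt e v = 0)
    (T : ℝ) (hT : 0 < T)
    (u : E → ℝ → ℝ → ℝ) (uhat : V → ℝ → ℝ) (g : V → ℝ → ℝ)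
    (hg : ∀ v, ContinuousOn (g v) (Set.Icc 0 T))
    (hu : ∀ e, ContDiff ℝ 1 (fun p : ℝ × ℝ => u e p.1 p.2))
    (huhat : ∀ v, ContinuousOn (uhat v) (Set.Icc 0 T))
    (hpde : ∀ e, ∀ y ∈ Set.Icc 0 (ℓ e), ∀ t ∈ Set.Icc 0 T,
      a e y * deriv (fun s => u e y s) t + b e * deriv (fun z => u e z t) y = 0)
    (hcouple : ∀ v : V, ∀ e ∈ eoutEdges src tgt b v, ∀ t ∈ Set.Icc 0 T,
      vtxTrace tgt ℓ u e v t = uhat v t)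
    (hinflow : ∀ v ∈ inflowBdry src tgt b, ∀ t ∈ Set.Icc 0 T, uhat v t = g v t)
    (hmix : ∀ v ∈ innerV src tgt ∪ outflowBdry src tgt b, ∀ t ∈ Set.Icc 0 T,
      (∑ e ∈ einEdges src tgt b v, b e * incid src tgt e v) * uhat v t
        = ∑ e ∈ einEdges src tgt b v, b e * incid src tgt e v * vtxTrace tgt ℓ u e v t) :
    ∀ t ∈ Set.Icc 0 T,
      HasDerivAt (fun s => ∑ e : E, ∫ y in (0 : ℝ)..(ℓ e), a e y * u e y s)
        (-∑ v ∈ bdryV src tgt, ∑ e ∈ edgesAt src tgt v,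
          b e * incid src tgt e v * vtxTrace tgt ℓ u e v t) t := by
  intro t ht
  have hder := HasDerivAt.fun_sum (u := (Finset.univ : Finset E)) (x := t)
    (fun e _ => edge_mass_aux (ℓ e) (hℓ e) (a e) (b e) (ha e) (u e) (hu e) t
      (fun y hy => hpde e y hy t ht))
  refine HasDerivAt.congr_deriv hder ?_
  symm
  rw [Finset.sum_neg_distrib, neg_inj]
  -- inner vertices do not contribute
  have hinner : ∀ v ∈ innerV src tgt, ∑ e ∈ edgesAt src tgt v,
      b e * incid src tgt e v * vtxTrace tgt ℓ u e v t = 0 := by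
    intro v hv
    have hsplit : ∀ f : E → ℝ, ∑ e ∈ edgesAt src tgt v, b e * incid src tgt e v * f e
        = ∑ e ∈ einEdges src tgt b v, b e * incid src tgt e v * f e
          + ∑ e ∈ eoutEdges src tgt b v, b e * incid src tgt e v * f e := by
      intro f
      unfold einEdges eoutEdges
      rw [Finset.sum_filter, Finset.sum_filter, ← Finset.sum_add_distrib]
      refine Finset.sum_congr rfl fun e _ => ?_
      rcases lt_trichotomy (b e * incid src tgt e v) 0 with h | h | h
      · rw [if_neg h.le.not_gt, if_pos h, zero_add]
      · simp [h]
      · rw [if_pos h, if_neg h.le.not_gt, add_zero]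
    have h1 := hmix v (Finset.mem_union_left _ hv) t ht
    have h2 := hsplit (fun _ => uhat v t)
    rw [← Finset.sum_mul, hcons v hv, ← Finset.sum_mul, h1] at h2
    rw [hsplit, Finset.sum_congr (s₁ := eoutEdges src tgt b v) rfl
      (fun e he => by rw [hcouple v e he t ht])]
    linarith
  have hall : ∑ v ∈ bdryV src tgt, ∑ e ∈ edgesAt src tgt v,
      b e * incid src tgt e v * vtxTrace tgt ℓ u e v t
      = ∑ v : V, ∑ e ∈ edgesAt src tgt v,
        b e * incid src tgt e v * vtxTrace tgt ℓ u e v t := by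
    apply Finset.sum_subset (Finset.subset_univ _)
    intro v _ hv
    apply hinner
    simp only [bdryV, innerV, Finset.mem_filter, Finset.mem_univ, true_and] at hv ⊢
    omega
  rw [hall]
  have hfull : ∀ v : V, ∑ e ∈ edgesAt src tgt v,
      b e * incid src tgt e v * vtxTrace tgt ℓ u e v t
      = ∑ e : E, ((if tgt e = v then b e * u e (ℓ e) t else 0)
        - (if src e = v then b e * u e 0 t else 0)) := by
    intro v
    unfold edgesAt
    rw [Finset.sum_filter]
    refine Finset.sum_congr rfl fun e _ => ?_
    have hl := hloop e
    unfold incid vtxTrace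
    by_cases h1 : tgt e = v
    · have h2 : src e ≠ v := fun h => hl (h.trans h1.symm)
      simp [h1, h2]
    · by_cases h2 : src e = v
      · simp [h1, h2]
      · simp [h1, h2]
  simp_rw [hfull]
  rw [Finset.sum_comm]
  refine Finset.sum_congr rfl fun e _ => ?_
  rw [Finset.sum_sub_distrib, Finset.sum_ite_eq, Finset.sum_ite_eq]
  simp only [Finset.mem_univ, if_true]
  ring
end

section
/- Consider a directed network: finite vertex set V, finite edge set E, each edge e with a start and an end vertex in V (incidence n^e(v) = −1 at the start, +1 at the end, 0 otherwise) and length ℓ^e > 0, continuous a^e : [0,ℓ^e] → ℝ with a^e ≥ a₀ > 0, and constant b^e ≠ 0; assume flow conservation Σ_{e∈E(v)} b^e n^e(v) = 0 at every inner vertex v ∈ V₀. Let (u^e, û^v) be a classical solution of the network transport problem on [0,T] with inflow data g^v. Then for all t ∈ [0,T]: d/dt Σ_{e∈E} ∫_0^{ℓ^e} a^e(x) u^e(x,t)² dx = −Σ_{v∈V_∂^out} |b^e n^e(v)| u^e(v,t)² + Σ_{v∈V_∂^in} |b^e n^e(v)| g^v(t)² − Σ_{v∈V₀} Σ_{e∈E_in(v)}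 |b^e n^e(v)| (u^e(v,t) − û^v(t))², where in the boundary sums e denotes the unique edge incident to the boundary vertex v. -/
open Finset

theorem edge_deriv (l : ℝ) (hl : 0 < l) (a : ℝ → ℝ) (ha : ContinuousOn a (Set.Icc 0 l))
    (b : ℝ) (u : ℝ → ℝ → ℝ) (hu : ContDiff ℝ 1 (fun p : ℝ × ℝ => u p.1 p.2)) (t : ℝ)
    (hpde : ∀ y ∈ Set.Icc 0 l,
      a y * deriv (fun s => u y s) t + b * deriv (fun z => u z t) y = 0) :
    HasDerivAt (fun s => ∫ y in (0 : ℝ)..l, a y * u y s ^ 2)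
      (-(b * (u l t ^ 2 - u 0 t ^ 2))) t := by
  have hd : Differentiable ℝ (fun p : ℝ × ℝ => u p.1 p.2) := hu.differentiable (by norm_num)
  have hfc := hu.continuous_fderiv (by norm_num)
  let D := fun p : ℝ × ℝ => fderiv ℝ (fun p : ℝ × ℝ => u p.1 p.2) p
  have ht : ∀ y s, HasDerivAt (fun s => u y s) (D (y, s) (0, 1)) s := by
    intro y s
    have h1 : HasDerivAt (fun s : ℝ => (y, s)) ((0 : ℝ), (1 : ℝ)) s :=
      (hasDerivAt_const s y).prodMk (hasDerivAt_id s)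
    exact (hd (y, s)).hasFDerivAt.comp_hasDerivAt s h1
  have hx : ∀ y s, HasDerivAt (fun z => u z s) (D (y, s) (1, 0)) y := by
    intro y s
    have h1 : HasDerivAt (fun z : ℝ => (z, s)) ((1 : ℝ), (0 : ℝ)) y :=
      (hasDerivAt_id y).prodMk (hasDerivAt_const y s)
    exact (hd (y, s)).hasFDerivAt.comp_hasDerivAt y h1
  have hDt : Continuous fun p : ℝ × ℝ => D p (0, 1) := hfc.clm_apply continuous_const
  have hDx : Continuous fun p : ℝ × ℝ => D p (1, 0) := hfc.clm_apply continuous_const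
  have huc := hu.continuous
  have hG : Continuous fun p : ℝ × ℝ => 2 * u p.1 p.2 * D p (0, 1) :=
    (continuous_const.mul huc).mul hDt
  obtain ⟨C, hC⟩ := (isCompact_Icc.prod (isCompact_Icc (a := t - 1) (b := t + 1))).exists_bound_of_continuousOn
    (s := Set.Icc 0 l ×ˢ Set.Icc (t - 1) (t + 1)) hG.continuousOn
  obtain ⟨M, hM⟩ := isCompact_Icc.exists_bound_of_continuousOn ha
  have hsl : ∀ s, Continuous fun y => u y s := fun s =>
    huc.comp (continuous_id.prodMk continuous_const)
  have hGs : ∀ s, Continuous fun y => 2 * u y s * D (y, s) (0, 1) := fun s =>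
    hG.comp (continuous_id.prodMk continuous_const)
  have hF : ∀ s, IntervalIntegrable (fun y => a y * u y s ^ 2) MeasureTheory.volume 0 l := by
    intro s
    apply ContinuousOn.intervalIntegrable
    rw [Set.uIcc_of_le hl.le]
    exact ha.mul ((hsl s).pow 2).continuousOn
  have hF' : ∀ s, IntervalIntegrable (fun y => a y * (2 * u y s * D (y, s) (0, 1)))
      MeasureTheory.volume 0 l := by
    intro s
    apply ContinuousOn.intervalIntegrable
    rw [Set.uIcc_of_le hl.le]
    exact ha.mul (hGs s).continuousOn
  have hsub : ∀ y ∈ Set.uIoc 0 l, y ∈ Set.Icc 0 l := by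
    intro y hy
    rw [Set.uIoc_of_le hl.le] at hy
    exact Set.Ioc_subset_Icc_self hy
  have key := (intervalIntegral.hasDerivAt_integral_of_dominated_loc_of_deriv_le
    (μ := MeasureTheory.volume) (a := 0) (b := l)
    (F := fun s y => a y * u y s ^ 2)
    (F' := fun s y => a y * (2 * u y s * D (y, s) (0, 1)))
    (x₀ := t) (s := Set.Icc (t - 1) (t + 1)) (bound := fun _ => M * C)
    (Icc_mem_nhds (by linarith) (by linarith))
    (Filter.Eventually.of_forall fun s => (hF s).aestronglyMeasurable_restrict_uIoc) (hF t)
    ((hF' t).aestronglyMeasurable_restrict_uIoc)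
    (Filter.Eventually.of_forall fun y hy s hs => by
      rw [norm_mul]
      exact mul_le_mul (hM y (hsub y hy)) (hC (y, s) ⟨hsub y hy, hs⟩) (norm_nonneg _)
        ((norm_nonneg _).trans (hM y (hsub y hy))))
    intervalIntegrable_const
    (Filter.Eventually.of_forall fun y hy s hs => by
      have := ((ht y s).pow 2).const_mul (a y)
      simpa using this)).2
  refine key.congr_deriv (Eq.symm ?_)
  have hcong : ∫ y in (0 : ℝ)..l, a y * (2 * u y t * D (y, t) (0, 1))
      = ∫ y in (0 : ℝ)..l, -b * (2 * u y t * D (y, t) (1, 0)) := by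
    apply intervalIntegral.integral_congr
    intro y hy
    rw [Set.uIcc_of_le hl.le] at hy
    have h := hpde y hy
    rw [(ht y t).deriv, (hx y t).deriv] at h
    change a y * (2 * u y t * D (y, t) (0, 1)) = -b * (2 * u y t * D (y, t) (1, 0))
    linear_combination (2 * u y t) * h
  rw [hcong, intervalIntegral.integral_const_mul,
    intervalIntegral.integral_eq_sub_of_hasDerivAt (f := fun y => u y t ^ 2)]
  · ring
  · intro y _
    simpa using (hx y t).fun_pow 2
  · apply Continuous.intervalIntegrable
    exact (continuous_const.mul (hsl t)).mul
      (hDx.comp (continuous_id.prodMk continuous_const))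

theorem edge_sum {V E : Type*} [Fintype V] [Fintype E] [DecidableEq V]
    (src tgt : E → V) (hloop : ∀ e, src e ≠ tgt e) (ℓ b : E → ℝ)
    (u : E → ℝ → ℝ → ℝ) (t : ℝ) :
    ∑ e : E, -(b e * (u e (ℓ e) t ^ 2 - u e 0 t ^ 2))
      = ∑ v : V, -∑ e ∈ edgesAt src tgt v,
          b e * incid src tgt e v * vtxTrace tgt ℓ u e v t ^ 2 := by
  rw [Finset.sum_neg_distrib, Finset.sum_neg_distrib]
  congr 1
  simp only [edgesAt, Finset.sum_filter]
  rw [Finset.sum_comm]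
  refine Finset.sum_congr rfl fun e _ => ?_
  have : ∀ v : V, (if src e = v ∨ tgt e = v then
      b e * incid src tgt e v * vtxTrace tgt ℓ u e v t ^ 2 else 0)
      = (if tgt e = v then b e * u e (ℓ e) t ^ 2 else 0)
        - (if src e = v then b e * u e 0 t ^ 2 else 0) := by
    intro v
    unfold incid vtxTrace
    by_cases h1 : tgt e = v
    · have h2 : src e ≠ v := h1 ▸ hloop e
      simp [h1, h2]
    · by_cases h2 : src e = v <;> simp [h1, h2]
  simp only [this, Finset.sum_sub_distrib, Finset.sum_ite_eq, Finset.mem_univ, if_true]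
  ring

/-- Energy identity for transport on a network: for a classical solution of the network
transport problem, the energy is dissipated at the outflow boundary vertices and, through
mixing, at the inner junctions, and is fed in at the inflow boundary vertices. -/
theorem stmt_16 {V E : Type*} [Fintype V] [Fintype E] [DecidableEq V] [DecidableEq E]
    (src tgt : E → V) (hloop : ∀ e, src e ≠ tgt e)
    (ℓ : E → ℝ) (hℓ : ∀ e, 0 < ℓ e)
    (a : E → ℝ → ℝ) (a₀ : ℝ) (ha₀ : 0 < a₀)
    (ha : ∀ e, ContinuousOn (a e) (Set.Icc 0 (ℓ e)))
    (haa : ∀ e, ∀ y ∈ Set.Icc 0 (ℓ e), a₀ ≤ a e y)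
    (b : E → ℝ) (hb : ∀ e, b e ≠ 0)
    (hcons : ∀ v ∈ innerV src tgt,
      ∑ e ∈ edgesAt src tgt v, b e * incid src tgt e v = 0)
    (T : ℝ) (hT : 0 < T)
    (u : E → ℝ → ℝ → ℝ) (uhat : V → ℝ → ℝ) (g : V → ℝ → ℝ)
    (hg : ∀ v, ContinuousOn (g v) (Set.Icc 0 T))
    (hu : ∀ e, ContDiff ℝ 1 (fun p : ℝ × ℝ => u e p.1 p.2))
    (huhat : ∀ v, ContinuousOn (uhat v) (Set.Icc 0 T))
    (hpde : ∀ e, ∀ y ∈ Set.Icc 0 (ℓ e), ∀ t ∈ Set.Icc 0 T,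
      a e y * deriv (fun s => u e y s) t + b e * deriv (fun z => u e z t) y = 0)
    (hcouple : ∀ v : V, ∀ e ∈ eoutEdges src tgt b v, ∀ t ∈ Set.Icc 0 T,
      vtxTrace tgt ℓ u e v t = uhat v t)
    (hinflow : ∀ v ∈ inflowBdry src tgt b, ∀ t ∈ Set.Icc 0 T, uhat v t = g v t)
    (hmix : ∀ v ∈ innerV src tgt ∪ outflowBdry src tgt b, ∀ t ∈ Set.Icc 0 T,
      (∑ e ∈ einEdges src tgt b v, b e * incid src tgt e v) * uhat v t
        = ∑ e ∈ einEdges src tgt b v, b e * incid src tgt e v * vtxTrace tgt ℓ u e v t) :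
    ∀ t ∈ Set.Icc 0 T,
      HasDerivAt (fun s => ∑ e : E, ∫ y in (0 : ℝ)..(ℓ e), a e y * u e y s ^ 2)
        (-(∑ v ∈ outflowBdry src tgt b, ∑ e ∈ edgesAt src tgt v,
            |b e * incid src tgt e v| * vtxTrace tgt ℓ u e v t ^ 2)
          + (∑ v ∈ inflowBdry src tgt b, ∑ e ∈ edgesAt src tgt v,
            |b e * incid src tgt e v| * g v t ^ 2)
          - ∑ v ∈ innerV src tgt, ∑ e ∈ einEdges src tgt b v,
            |b e * incid src tgt e v| * (vtxTrace tgt ℓ u e v t - uhat v t) ^ 2) t := by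
  intro t ht
  have h := HasDerivAt.fun_sum (u := Finset.univ) fun e _ =>
    edge_deriv (ℓ e) (hℓ e) (a e) (ha e) (b e) (u e) (hu e) t
      (fun y hy => hpde e y hy t ht)
  refine h.congr_deriv (Eq.symm ?_)
  rw [edge_sum src tgt hloop ℓ b u t]
  have hS : ∀ (S : Finset V) (f : V → ℝ), ∑ v ∈ S, f v = ∑ v, if v ∈ S then f v else 0 := by
    intro S f
    simp
  rw [hS (outflowBdry src tgt b), hS (inflowBdry src tgt b), hS (innerV src tgt),
    ← Finset.sum_neg_distrib, ← Finset.sum_add_distrib, ← Finset.sum_sub_distrib]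
  refine Finset.sum_congr rfl fun v _ => ?_
  have hne : ∀ e ∈ edgesAt src tgt v, b e * incid src tgt e v ≠ 0 := by
    intro e he
    refine mul_ne_zero (hb e) ?_
    simp only [edgesAt, Finset.mem_filter, Finset.mem_univ, true_and] at he
    unfold incid
    by_cases h1 : tgt e = v
    · have h2 : src e ≠ v := h1 ▸ hloop e
      simp [h1, h2]
    · have h2 : src e = v := he.resolve_right h1
      simp [h1, h2]
  by_cases hin : v ∈ innerV src tgt
  · have hcard : 2 ≤ (edgesAt src tgt v).card := by simpa [innerV] using hin
    have hnb : v ∉ bdryV src tgt := by simp [bdryV]; omega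
    have h1 : v ∉ outflowBdry src tgt b := fun h => hnb (Finset.mem_filter.1 h).1
    have h2 : v ∉ inflowBdry src tgt b := fun h => hnb (Finset.mem_filter.1 h).1
    rw [if_neg h1, if_neg h2, if_pos hin]
    have hm := hmix v (Finset.mem_union_left _ hin) t ht
    have hout : ∀ f : E → ℝ, ∑ e ∈ edgesAt src tgt v, f e
        = ∑ e ∈ einEdges src tgt b v, f e + ∑ e ∈ eoutEdges src tgt b v, f e := by
      intro f
      rw [← Finset.sum_filter_add_sum_filter_not (edgesAt src tgt v)
        (fun e => 0 < b e * incid src tgt e v)]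
      congr 1
      refine Finset.sum_congr ?_ fun _ _ => rfl
      refine Finset.filter_congr fun e he => ?_
      rw [not_lt]
      exact ⟨fun h => lt_of_le_of_ne h (hne e he), le_of_lt⟩
    have hc := hcons v hin
    rw [hout] at hc ⊢
    have e1 : ∑ e ∈ eoutEdges src tgt b v,
        b e * incid src tgt e v * vtxTrace tgt ℓ u e v t ^ 2
        = (∑ e ∈ eoutEdges src tgt b v, b e * incid src tgt e v) * uhat v t ^ 2 := by
      rw [Finset.sum_mul]
      refine Finset.sum_congr rfl fun e he => ?_
      rw [hcouple v e he t ht]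
    have e2 : ∑ e ∈ einEdges src tgt b v,
          |b e * incid src tgt e v| * (vtxTrace tgt ℓ u e v t - uhat v t) ^ 2
        = ∑ e ∈ einEdges src tgt b v, b e * incid src tgt e v * vtxTrace tgt ℓ u e v t ^ 2
          - 2 * uhat v t *
            ∑ e ∈ einEdges src tgt b v, b e * incid src tgt e v * vtxTrace tgt ℓ u e v t
          + uhat v t ^ 2 * ∑ e ∈ einEdges src tgt b v, b e * incid src tgt e v := by
      rw [Finset.mul_sum, Finset.mul_sum, ← Finset.sum_sub_distrib, ← Finset.sum_add_distrib]
      refine Finset.sum_congr rfl fun e he => ?_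
      rw [abs_of_pos (Finset.mem_filter.1 he).2]
      ring
    rw [e1, e2, ← hm]
    linear_combination (uhat v t ^ 2) * hc
  · have hcard : (edgesAt src tgt v).card < 2 := by simpa [innerV] using hin
    have hb' : v ∈ bdryV src tgt := by simp [bdryV]; omega
    rw [if_neg hin]
    rcases Nat.lt_succ_iff_lt_or_eq.1 hcard with h0 | h1
    · have h0 : edgesAt src tgt v = ∅ := Finset.card_eq_zero.1 (by omega)
      simp [h0]
    · obtain ⟨e, he⟩ := Finset.card_eq_one.1 h1
      have hmem : e ∈ edgesAt src tgt v := by simp [he]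
      rcases lt_or_gt_of_ne (hne e hmem) with hneg | hpos
      · have hi : v ∈ inflowBdry src tgt b := Finset.mem_filter.2 ⟨hb', e, hmem, hneg⟩
        have ho : v ∉ outflowBdry src tgt b := by
          simp [outflowBdry, he, hneg.le]
        rw [if_neg ho, if_pos hi, he, Finset.sum_singleton, Finset.sum_singleton,
          hcouple v e (Finset.mem_filter.2 ⟨hmem, hneg⟩) t ht, hinflow v hi t ht,
          abs_of_neg hneg]
        ring
      · have ho : v ∈ outflowBdry src tgt b := Finset.mem_filter.2 ⟨hb', e, hmem, hpos⟩
        have hi : v ∉ inflowBdry src tgt b := by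
          simp [inflowBdry, he, hpos.le]
        rw [if_pos ho, if_neg hi, he, Finset.sum_singleton, Finset.sum_singleton,
          abs_of_pos hpos]
        ring
end

section
/- Consider a directed network: finite vertex set V, finite edge set E, each edge e with a start and an end vertex in V (incidence n^e(v) = −1 at the start, +1 at the end, 0 otherwise) and length ℓ^e > 0, continuous a^e : [0,ℓ^e] → ℝ with a^e ≥ a₀ > 0, and constant b^e ≠ 0; assume flow conservation Σ_{e∈E(v)} b^e n^e(v) = 0 at every inner vertex v ∈ V₀. Let (u₁^e, û₁^v) and (u₂^e, û₂^v) be two classical solutions of the network transport problem on [0,T] with the same initial values u₁^e(·,0) = u₂^e(·,0) on every edge and the same inflow data g^v at every inflow vertex. Then u₁^e = u₂^e on [0,ℓ^e] × [0,T] for every edge e. -/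
open Finset

lemma vtx_nonneg {V E : Type*} [Fintype V] [Fintype E] [DecidableEq V] [DecidableEq E]
    (src tgt : E → V) (b : E → ℝ)
    (hcons : ∀ v ∈ innerV src tgt,
      ∑ e ∈ edgesAt src tgt v, b e * incid src tgt e v = 0)
    (tr : E → V → ℝ) (h : V → ℝ)
    (hc : ∀ v : V, ∀ e ∈ eoutEdges src tgt b v, tr e v = h v)
    (hi : ∀ v ∈ inflowBdry src tgt b, h v = 0)
    (hm : ∀ v ∈ innerV src tgt,
      (∑ e ∈ einEdges src tgt b v, b e * incid src tgt e v) * h v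
        = ∑ e ∈ einEdges src tgt b v, b e * incid src tgt e v * tr e v) (v : V) :
    0 ≤ ∑ e ∈ edgesAt src tgt v, b e * incid src tgt e v * tr e v ^ 2 := by
  by_cases hv : v ∈ innerV src tgt
  · have hsplit : ∀ f : E → ℝ, ∑ e ∈ edgesAt src tgt v, b e * incid src tgt e v * f e
        = ∑ e ∈ einEdges src tgt b v, b e * incid src tgt e v * f e
          + ∑ e ∈ eoutEdges src tgt b v, b e * incid src tgt e v * f e := by
      intro f
      rw [einEdges, eoutEdges, ← Finset.sum_filter_add_sum_filter_not (edgesAt src tgt v)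
        (fun e => 0 < b e * incid src tgt e v)]
      congr 1
      symm
      apply Finset.sum_subset
      · intro e he
        simp only [Finset.mem_filter] at he ⊢
        exact ⟨he.1, not_lt.2 he.2.le⟩
      · intro e he he'
        simp only [Finset.mem_filter, not_and, not_lt] at he he'
        rw [le_antisymm he.2 (he' he.1), zero_mul]
    have h1 := hsplit (fun _ => 1)
    simp only [mul_one] at h1
    rw [hcons v hv] at h1
    rw [hsplit]
    have h2 : ∑ e ∈ eoutEdges src tgt b v, b e * incid src tgt e v * tr e v ^ 2
        = (∑ e ∈ eoutEdges src tgt b v, b e * incid src tgt e v) * h v ^ 2 := by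
      rw [Finset.sum_mul]
      exact Finset.sum_congr rfl fun e he => by rw [hc v e he]
    have h3 : 0 ≤ ∑ e ∈ einEdges src tgt b v,
        b e * incid src tgt e v * (tr e v - h v) ^ 2 := by
      refine Finset.sum_nonneg fun e he => mul_nonneg ?_ (sq_nonneg _)
      simp only [einEdges, Finset.mem_filter] at he
      exact he.2.le
    have h4 : ∑ e ∈ einEdges src tgt b v, b e * incid src tgt e v * (tr e v - h v) ^ 2
        = ∑ e ∈ einEdges src tgt b v, b e * incid src tgt e v * tr e v ^ 2
          - 2 * h v * ∑ e ∈ einEdges src tgt b v, b e * incid src tgt e v * tr e v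
          + (∑ e ∈ einEdges src tgt b v, b e * incid src tgt e v) * h v ^ 2 := by
      rw [Finset.mul_sum, Finset.sum_mul, ← Finset.sum_sub_distrib, ← Finset.sum_add_distrib]
      exact Finset.sum_congr rfl fun e _ => by ring
    rw [← hm v hv] at h4
    rw [h2]
    have h5 : ∑ e ∈ eoutEdges src tgt b v, b e * incid src tgt e v
      = - ∑ e ∈ einEdges src tgt b v, b e * incid src tgt e v := by linarith
    rw [h5]
    nlinarith
  · refine Finset.sum_nonneg fun e he => ?_
    rcases le_or_gt 0 (b e * incid src tgt e v) with hs | hs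
    · positivity
    · have hin : v ∈ inflowBdry src tgt b := by
        simp only [inflowBdry, bdryV, innerV, Finset.mem_filter, Finset.mem_univ, true_and,
          not_le] at hv ⊢
        exact ⟨hv, e, he, hs⟩
      rw [hc v e (by simp only [eoutEdges, Finset.mem_filter]; exact ⟨he, hs⟩), hi v hin]
      simp

lemma edge_vtx_sum {V E : Type*} [Fintype V] [Fintype E] [DecidableEq V] [DecidableEq E]
    (src tgt : E → V) (hloop : ∀ e, src e ≠ tgt e) (b : E → ℝ) (p q : E → ℝ) :
    ∑ v, ∑ e ∈ edgesAt src tgt v, b e * incid src tgt e v * (if tgt e = v then p e else q e) ^ 2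
      = ∑ e, b e * (p e ^ 2 - q e ^ 2) := by
  simp only [edgesAt, Finset.sum_filter]
  rw [Finset.sum_comm]
  refine Finset.sum_congr rfl fun e _ => ?_
  have : ∀ v, (if src e = v ∨ tgt e = v then
      b e * incid src tgt e v * (if tgt e = v then p e else q e) ^ 2 else 0)
      = (if tgt e = v then b e * p e ^ 2 else 0) - (if src e = v then b e * q e ^ 2 else 0) := by
    intro v
    have := hloop e
    unfold incid
    by_cases h1 : src e = v <;> by_cases h2 : tgt e = v <;> simp [h1, h2]
    exact absurd (h1.trans h2.symm) this
  simp only [this, Finset.sum_sub_distrib, Finset.sum_ite_eq, Finset.mem_univ, if_true]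
  ring

lemma edge_energy (w : ℝ → ℝ → ℝ) (hw : ContDiff ℝ 1 (fun p : ℝ × ℝ => w p.1 p.2))
    (a : ℝ → ℝ) (b L t : ℝ) (hL : 0 < L) (ht : 0 ≤ t)
    (hpde : ∀ y ∈ Set.Icc 0 L, ∀ s ∈ Set.Icc 0 t,
      a y * deriv (fun s => w y s) s + b * deriv (fun z => w z s) y = 0)
    (hinit : ∀ y ∈ Set.Icc 0 L, w y 0 = 0) :
    ∫ y in (0:ℝ)..L, a y * w y t ^ 2 = - ∫ s in (0:ℝ)..t, b * (w L s ^ 2 - w 0 s ^ 2) := by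
  set W : ℝ × ℝ → ℝ := fun p => w p.1 p.2 with hW
  have hd : Differentiable ℝ W := hw.differentiable (by norm_num)
  have hcf : Continuous (fderiv ℝ W) := hw.continuous_fderiv (by norm_num)
  have hx : ∀ y s, HasDerivAt (fun z => w z s) (fderiv ℝ W (y, s) (1, 0)) y := fun y s =>
    HasFDerivAt.comp_hasDerivAt (f := fun z => (z, s)) (l := W) y (hd (y, s)).hasFDerivAt
      ((hasDerivAt_id y).prodMk (hasDerivAt_const y s))
  have hs : ∀ y s, HasDerivAt (fun r => w y r) (fderiv ℝ W (y, s) (0, 1)) s := fun y s =>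
    HasFDerivAt.comp_hasDerivAt (f := fun r => (y, r)) (l := W) s (hd (y, s)).hasFDerivAt
      ((hasDerivAt_const s y).prodMk (hasDerivAt_id s))
  have cx : Continuous fun p : ℝ × ℝ => 2 * w p.1 p.2 * fderiv ℝ W p (1, 0) := by
    have : Continuous fun p : ℝ × ℝ => w p.1 p.2 := hd.continuous
    have h2 : Continuous fun p => fderiv ℝ W p (1, 0) := hcf.clm_apply continuous_const
    fun_prop
  have cs : Continuous fun p : ℝ × ℝ => 2 * w p.1 p.2 * fderiv ℝ W p (0, 1) := by
    have : Continuous fun p : ℝ × ℝ => w p.1 p.2 := hd.continuous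
    have h2 : Continuous fun p => fderiv ℝ W p (0, 1) := hcf.clm_apply continuous_const
    fun_prop
  have e1 : ∀ y ∈ Set.Icc 0 L, a y * w y t ^ 2
      = ∫ s in (0:ℝ)..t, -b * (2 * w y s * fderiv ℝ W (y, s) (1, 0)) := by
    intro y hy
    have : ∫ s in (0:ℝ)..t, 2 * w y s * fderiv ℝ W (y, s) (0, 1) = w y t ^ 2 - w y 0 ^ 2 := by
      apply intervalIntegral.integral_eq_sub_of_hasDerivAt
      · intro s _
        simpa using (hs y s).fun_pow 2
      · exact (cs.comp (by fun_prop : Continuous fun s : ℝ => (y, s))).intervalIntegrable _ _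
    rw [hinit y hy] at this
    have h0 : w y t ^ 2 = w y t ^ 2 - 0 ^ 2 := by ring
    rw [h0, ← this, ← intervalIntegral.integral_const_mul]
    apply intervalIntegral.integral_congr
    intro s hs'
    rw [Set.uIcc_of_le ht] at hs'
    have := hpde y hy s hs'
    rw [(hx y s).deriv, (hs y s).deriv] at this
    simp only
    linear_combination 2 * w y s * this
  have e2 : ∀ s, w L s ^ 2 - w 0 s ^ 2
      = ∫ y in (0:ℝ)..L, 2 * w y s * fderiv ℝ W (y, s) (1, 0) := by
    intro s
    symm
    apply intervalIntegral.integral_eq_sub_of_hasDerivAt (f := fun y => w y s ^ 2)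
    · intro y _
      simpa using (hx y s).fun_pow 2
    · exact (cx.comp (by fun_prop : Continuous fun y : ℝ => (y, s))).intervalIntegrable _ _
  rw [intervalIntegral.integral_congr (g := fun y => ∫ s in (0:ℝ)..t,
    -b * (2 * w y s * fderiv ℝ W (y, s) (1, 0)))
    (fun y hy => e1 y (by rwa [Set.uIcc_of_le hL.le] at hy))]
  simp only [e2, intervalIntegral.integral_const_mul]
  rw [MeasureTheory.intervalIntegral_intervalIntegral_swap]
  · ring
  · refine (ContinuousOn.integrableOn_compact (K := Set.uIcc 0 L ×ˢ Set.uIcc 0 t)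
      (isCompact_uIcc.prod isCompact_uIcc) cx.continuousOn).mono_set
      (Set.prod_mono Set.uIoc_subset_uIcc Set.uIoc_subset_uIcc)

/-- Uniqueness for transport on a network: two classical solutions of the network
transport problem with the same initial values and the same inflow data coincide. -/
theorem stmt_17 {V E : Type*} [Fintype V] [Fintype E] [DecidableEq V] [DecidableEq E]
    (src tgt : E → V) (hloop : ∀ e, src e ≠ tgt e)
    (ℓ : E → ℝ) (hℓ : ∀ e, 0 < ℓ e)
    (a : E → ℝ → ℝ) (a₀ : ℝ) (ha₀ : 0 < a₀)
    (ha : ∀ e, ContinuousOn (a e) (Set.Icc 0 (ℓ e)))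
    (haa : ∀ e, ∀ y ∈ Set.Icc 0 (ℓ e), a₀ ≤ a e y)
    (b : E → ℝ) (hb : ∀ e, b e ≠ 0)
    (hcons : ∀ v ∈ innerV src tgt,
      ∑ e ∈ edgesAt src tgt v, b e * incid src tgt e v = 0)
    (T : ℝ) (hT : 0 < T)
    (u₁ u₂ : E → ℝ → ℝ → ℝ) (uhat₁ uhat₂ : V → ℝ → ℝ) (g : V → ℝ → ℝ)
    (hg : ∀ v, ContinuousOn (g v) (Set.Icc 0 T))
    (hu₁ : ∀ e, ContDiff ℝ 1 (fun p : ℝ × ℝ => u₁ e p.1 p.2))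
    (hu₂ : ∀ e, ContDiff ℝ 1 (fun p : ℝ × ℝ => u₂ e p.1 p.2))
    (huhat₁ : ∀ v, ContinuousOn (uhat₁ v) (Set.Icc 0 T))
    (huhat₂ : ∀ v, ContinuousOn (uhat₂ v) (Set.Icc 0 T))
    (hpde₁ : ∀ e, ∀ y ∈ Set.Icc 0 (ℓ e), ∀ t ∈ Set.Icc 0 T,
      a e y * deriv (fun s => u₁ e y s) t + b e * deriv (fun z => u₁ e z t) y = 0)
    (hpde₂ : ∀ e, ∀ y ∈ Set.Icc 0 (ℓ e), ∀ t ∈ Set.Icc 0 T,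
      a e y * deriv (fun s => u₂ e y s) t + b e * deriv (fun z => u₂ e z t) y = 0)
    (hcouple₁ : ∀ v : V, ∀ e ∈ eoutEdges src tgt b v, ∀ t ∈ Set.Icc 0 T,
      vtxTrace tgt ℓ u₁ e v t = uhat₁ v t)
    (hcouple₂ : ∀ v : V, ∀ e ∈ eoutEdges src tgt b v, ∀ t ∈ Set.Icc 0 T,
      vtxTrace tgt ℓ u₂ e v t = uhat₂ v t)
    (hinflow₁ : ∀ v ∈ inflowBdry src tgt b, ∀ t ∈ Set.Icc 0 T, uhat₁ v t = g v t)
    (hinflow₂ : ∀ v ∈ inflowBdry src tgt b, ∀ t ∈ Set.Icc 0 T, uhat₂ v t = g v t)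
    (hmix₁ : ∀ v ∈ innerV src tgt ∪ outflowBdry src tgt b, ∀ t ∈ Set.Icc 0 T,
      (∑ e ∈ einEdges src tgt b v, b e * incid src tgt e v) * uhat₁ v t
        = ∑ e ∈ einEdges src tgt b v, b e * incid src tgt e v * vtxTrace tgt ℓ u₁ e v t)
    (hmix₂ : ∀ v ∈ innerV src tgt ∪ outflowBdry src tgt b, ∀ t ∈ Set.Icc 0 T,
      (∑ e ∈ einEdges src tgt b v, b e * incid src tgt e v) * uhat₂ v t
        = ∑ e ∈ einEdges src tgt b v, b e * incid src tgt e v * vtxTrace tgt ℓ u₂ e v t)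
    (hinit : ∀ e, ∀ y ∈ Set.Icc 0 (ℓ e), u₁ e y 0 = u₂ e y 0) :
    ∀ e, ∀ y ∈ Set.Icc 0 (ℓ e), ∀ t ∈ Set.Icc 0 T, u₁ e y t = u₂ e y t := by
  have hw : ∀ e, ContDiff ℝ 1 (fun p : ℝ × ℝ => u₁ e p.1 p.2 - u₂ e p.1 p.2) :=
    fun e => (hu₁ e).sub (hu₂ e)
  intro e₀ y₀ hy₀ t ht
  have hsub : ∀ s ∈ Set.Icc 0 t, s ∈ Set.Icc 0 T := fun s hs => ⟨hs.1, hs.2.trans ht.2⟩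
  have hen : ∀ e, ∫ y in (0:ℝ)..(ℓ e), a e y * (u₁ e y t - u₂ e y t) ^ 2
      = - ∫ s in (0:ℝ)..t, b e * ((u₁ e (ℓ e) s - u₂ e (ℓ e) s) ^ 2
          - (u₁ e 0 s - u₂ e 0 s) ^ 2) := by
    intro e
    refine edge_energy (fun y s => u₁ e y s - u₂ e y s) (hw e) (a e) (b e) (ℓ e) t (hℓ e) ht.1
      ?_ ?_
    · intro y hy s hs
      have hp1 := hpde₁ e y hy s (hsub s hs)
      have hp2 := hpde₂ e y hy s (hsub s hs)
      have d1 := (hu₁ e).differentiable (by norm_num)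
      have d2 := (hu₂ e).differentiable (by norm_num)
      have p1 : Differentiable ℝ fun r : ℝ => (y, r) := by fun_prop
      have p2 : Differentiable ℝ fun z : ℝ => (z, s) := by fun_prop
      have q1 : DifferentiableAt ℝ (fun r => u₁ e y r) s := (d1.comp p1) s
      have q2 : DifferentiableAt ℝ (fun r => u₂ e y r) s := (d2.comp p1) s
      have q3 : DifferentiableAt ℝ (fun z => u₁ e z s) y := (d1.comp p2) y
      have q4 : DifferentiableAt ℝ (fun z => u₂ e z s) y := (d2.comp p2) y
      rw [deriv_fun_sub q1 q2, deriv_fun_sub q3 q4]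
      linear_combination hp1 - hp2
    · intro y hy
      simp only [hinit e y hy, sub_self]
  have hcon : ∀ e y, Continuous fun s => u₁ e y s - u₂ e y s := fun e y =>
    (hw e).continuous.comp (by fun_prop : Continuous fun s : ℝ => (y, s))
  have hcony : ∀ e, Continuous fun y => u₁ e y t - u₂ e y t := fun e =>
    (hw e).continuous.comp (by fun_prop : Continuous fun y : ℝ => (y, t))
  have hsum : ∑ e, ∫ y in (0:ℝ)..(ℓ e), a e y * (u₁ e y t - u₂ e y t) ^ 2 ≤ 0 := by
    simp only [hen, Finset.sum_neg_distrib]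
    rw [← intervalIntegral.integral_finsetSum]
    · rw [neg_nonpos]
      apply intervalIntegral.integral_nonneg ht.1
      intro s hs
      have hs' := hsub s hs
      rw [← edge_vtx_sum src tgt hloop b (fun e => u₁ e (ℓ e) s - u₂ e (ℓ e) s)
        (fun e => u₁ e 0 s - u₂ e 0 s)]
      refine Finset.sum_nonneg fun v _ => ?_
      have htr : ∀ e v, (if tgt e = v then u₁ e (ℓ e) s - u₂ e (ℓ e) s
          else u₁ e 0 s - u₂ e 0 s) = vtxTrace tgt ℓ u₁ e v s - vtxTrace tgt ℓ u₂ e v s := by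
        intro e v
        unfold vtxTrace
        split_ifs <;> rfl
      refine vtx_nonneg src tgt b hcons
        (fun e v => if tgt e = v then u₁ e (ℓ e) s - u₂ e (ℓ e) s else u₁ e 0 s - u₂ e 0 s)
        (fun v => uhat₁ v s - uhat₂ v s) ?_ ?_ ?_ v
      · intro v e he
        simp only [htr, hcouple₁ v e he s hs', hcouple₂ v e he s hs']
      · intro v hv
        simp only [hinflow₁ v hv s hs', hinflow₂ v hv s hs', sub_self]
      · intro v hv
        simp only [htr, mul_sub, Finset.sum_sub_distrib]
        rw [hmix₁ v (Finset.mem_union_left _ hv) s hs', hmix₂ v (Finset.mem_union_left _ hv) s hs']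
    · intro e _
      apply Continuous.intervalIntegrable
      have := hcon e 0
      have := hcon e (ℓ e)
      fun_prop
  have hpos : ∀ e, ∀ y ∈ Set.Icc 0 (ℓ e), 0 ≤ a e y * (u₁ e y t - u₂ e y t) ^ 2 :=
    fun e y hy => mul_nonneg (ha₀.le.trans (haa e y hy)) (sq_nonneg _)
  have hle : ∫ y in (0:ℝ)..(ℓ e₀), a e₀ y * (u₁ e₀ y t - u₂ e₀ y t) ^ 2 ≤ 0 :=
    (Finset.single_le_sum (f := fun e => ∫ y in (0:ℝ)..(ℓ e), a e y * (u₁ e y t - u₂ e y t) ^ 2)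
      (fun e _ => intervalIntegral.integral_nonneg (hℓ e).le (hpos e))
      (Finset.mem_univ e₀)).trans hsum
  by_contra hne
  have hne' : u₁ e₀ y₀ t - u₂ e₀ y₀ t ≠ 0 := sub_ne_zero.2 hne
  refine absurd hle (not_le.2 ?_)
  apply intervalIntegral.integral_pos (hℓ e₀)
  · exact (ha e₀).mul ((hcony e₀).pow 2).continuousOn
  · exact fun y hy => hpos e₀ y (Set.Ioc_subset_Icc_self hy)
  · exact ⟨y₀, hy₀, mul_pos (ha₀.trans_le (haa e₀ y₀ hy₀)) (by positivity)⟩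
end

section
/- Let b > 0, T > 0, k ≥ 0, let a : [0,ℓ] → ℝ be continuous with a > 0, let 0 = x₀ < ⋯ < x_M = ℓ be a grid, let g : [0,T] → ℝ be continuous, and for i = 1,…,M let u_i : [x_{i−1},x_i] × [0,T] → ℝ be continuously differentiable in t with u_i(·,t) a polynomial of degree ≤ k in x for each t. Define û₀(t) = g(t) and û_i(t) = u_i(x_i,t) for i = 1,…,M, and assume that for each i, each t, and every polynomial w of degree ≤ k: ∫_{x_{i−1}}^{x_i} a ∂_t u_i(x,t) w(x) dx − ∫_{x_{i−1}}^{x_i} b u_i(x,t) w'(x) dx + b u_i(x_i,t) w(x_i) − b û_{i−1}(t) w(x_{i−1}) = 0. Then for all t ∈ [0,T]: d/dt Σ_{i=1}^M ∫_{x_{i−1}}^{x_i} a(x) u_i(x,t) dx = b g(t) − b u_M(ℓ,t), i.e. the discrete total mass changes only through the inflow and outflow fluxes. -/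
/-- Elementwise mass: differentiation under the integral via Lagrange interpolation. -/
theorem elem_hasDerivAt (k : ℕ) (a : ℝ → ℝ) (c d : ℝ) (hcd : c ≤ d)
    (ha : ContinuousOn a (Set.Icc c d)) (v : ℝ → ℝ → ℝ)
    (hsm : ∀ y, ContDiff ℝ 1 (fun t => v y t))
    (hpoly : ∀ t, ∃ p : Polynomial ℝ, p.natDegree ≤ k ∧ ∀ y, v y t = Polynomial.eval y p)
    (t : ℝ) :
    HasDerivAt (fun s => ∫ y in c..d, a y * v y s)
      (∫ y in c..d, a y * deriv (fun s => v y s) t) t := by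
  obtain ⟨L, hL⟩ : ∃ L : ℕ → Polynomial ℝ, ∀ y s,
      v y s = ∑ j ∈ Finset.range (k + 1), v (j : ℝ) s * (L j).eval y := by
    refine ⟨fun j => Lagrange.basis (Finset.range (k + 1)) (fun n : ℕ => (n : ℝ)) j, ?_⟩
    intro y s
    obtain ⟨p, hp, hv⟩ := hpoly s
    have hdeg : p.degree < ((Finset.range (k + 1)).card : ℕ) := by
      rw [Finset.card_range]
      exact lt_of_le_of_lt Polynomial.degree_le_natDegree (by exact_mod_cast Nat.lt_succ_of_le hp)
    have h := Lagrange.eq_interpolate (s := Finset.range (k + 1)) (v := fun n : ℕ => (n : ℝ))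
      (fun _ _ _ _ h => Nat.cast_injective h) hdeg
    have h2 := congrArg (Polynomial.eval y) h
    rw [Lagrange.interpolate_apply, Polynomial.eval_finsetSum] at h2
    simp only [Polynomial.eval_mul, Polynomial.eval_C] at h2
    simp only [hv]
    exact h2
  have hint : ∀ (r : ℕ → ℝ), (∫ y in c..d, a y * ∑ j ∈ Finset.range (k + 1), r j * (L j).eval y)
      = ∑ j ∈ Finset.range (k + 1), r j * ∫ y in c..d, a y * (L j).eval y := by
    intro r
    simp only [← intervalIntegral.integral_const_mul]
    rw [← intervalIntegral.integral_finsetSum]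
    · congr 1
      ext y
      rw [Finset.mul_sum]
      exact Finset.sum_congr rfl fun j _ => by ring
    · intro j _
      apply ContinuousOn.intervalIntegrable
      rw [Set.uIcc_of_le hcd]
      exact continuousOn_const.mul (ha.mul (L j).continuous.continuousOn)
  have hd : ∀ y s, HasDerivAt (fun s => v y s) (deriv (fun s => v y s) s) s := fun y s =>
    ((hsm y).differentiable (by norm_num) s).hasDerivAt
  have hder : ∀ y, deriv (fun s => v y s) t
      = ∑ j ∈ Finset.range (k + 1), deriv (fun s => v (j : ℝ) s) t * (L j).eval y := by
    intro y
    have h : HasDerivAt (fun s => ∑ j ∈ Finset.range (k + 1), v (j : ℝ) s * (L j).eval y)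
      (∑ j ∈ Finset.range (k + 1), deriv (fun s => v (j : ℝ) s) t * (L j).eval y) t :=
      HasDerivAt.fun_sum fun j _ => (hd j t).mul_const _
    rw [← h.deriv]
    congr 1
    ext s
    exact hL y s
  have e1 : (fun s => ∫ y in c..d, a y * v y s) = fun s =>
      ∑ j ∈ Finset.range (k + 1), v (j : ℝ) s * ∫ y in c..d, a y * (L j).eval y := by
    ext s
    rw [← hint]
    congr 1
    ext y
    rw [← hL]
  have e2 : (∫ y in c..d, a y * deriv (fun s => v y s) t) =
      ∑ j ∈ Finset.range (k + 1), deriv (fun s => v (j : ℝ) s) t *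
        ∫ y in c..d, a y * (L j).eval y := by
    rw [← hint]
    congr 1
    ext y
    rw [← hder]
  rw [e1, e2]
  exact HasDerivAt.fun_sum fun j _ => (hd j t).mul_const _

/-- Discrete conservation property for the hybrid dG semi-discretization of the transport
equation on a single edge `[0,ℓ]` with flow in positive direction (`b > 0`) and inflow
data `g`: the discrete total mass changes only through the inflow and outflow fluxes.
The hybrid values are `g t` at the inflow vertex and the upwind traces
`u (i-1) (x i) t` at the remaining grid points. -/
theorem stmt_18 (b ℓ T : ℝ) (hb : 0 < b) (hT : 0 < T) (k : ℕ)
    (a : ℝ → ℝ) (ha : ContinuousOn a (Set.Icc 0 ℓ))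
    (hapos : ∀ y ∈ Set.Icc 0 ℓ, 0 < a y)
    (M : ℕ) (hM : 1 ≤ M) (x : ℕ → ℝ) (hx0 : x 0 = 0) (hxM : x M = ℓ)
    (hmono : ∀ i < M, x i < x (i + 1))
    (g : ℝ → ℝ) (hg : ContinuousOn g (Set.Icc 0 T))
    (u : ℕ → ℝ → ℝ → ℝ)
    (hsm : ∀ i < M, ∀ y, ContDiff ℝ 1 (fun t => u i y t))
    (hpoly : ∀ i < M, ∀ t, ∃ p : Polynomial ℝ,
      p.natDegree ≤ k ∧ ∀ y, u i y t = Polynomial.eval y p)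
    (hscheme : ∀ t ∈ Set.Icc 0 T, ∀ i < M, ∀ w : Polynomial ℝ, w.natDegree ≤ k →
      (∫ y in x i..x (i + 1), a y * deriv (fun s => u i y s) t * Polynomial.eval y w)
        - (∫ y in x i..x (i + 1), b * u i y t * Polynomial.eval y (Polynomial.derivative w))
        + b * u i (x (i + 1)) t * Polynomial.eval (x (i + 1)) w
        - b * (if i = 0 then g t else u (i - 1) (x i) t) * Polynomial.eval (x i) w = 0) :
    ∀ t ∈ Set.Icc 0 T,
      HasDerivAt
        (fun s => ∑ i ∈ Finset.range M, ∫ y in x i..x (i + 1), a y * u i y s)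
        (b * g t - b * u (M - 1) ℓ t) t := by
  intro t ht
  have hlow : ∀ i, i ≤ M → 0 ≤ x i := by
    intro i
    induction i with
    | zero => intro _; rw [hx0]
    | succ n ih => intro h; linarith [ih (by omega), hmono n (by omega)]
  have hup : ∀ n i, i + n = M → x i ≤ ℓ := by
    intro n
    induction n with
    | zero => intro i h; rw [← hxM, ← h]; simp
    | succ n ih => intro i h; linarith [ih (i + 1) (by omega), hmono i (by omega)]
  have hF := Finset.sum_range_sub'
    (fun i => b * (if i = 0 then g t else u (i - 1) (x i) t)) M
  have hval : b * g t - b * u (M - 1) ℓ t = ∑ i ∈ Finset.range M,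
      ∫ y in x i..x (i + 1), a y * deriv (fun s => u i y s) t := by
    have hM0 : M ≠ 0 := by omega
    simp only [if_true, hM0, if_false, hxM] at hF
    rw [← hF]
    refine Finset.sum_congr rfl fun i hi => ?_
    have h := hscheme t ht i (Finset.mem_range.mp hi) 1 (by simp)
    simp only [Polynomial.eval_one, Polynomial.derivative_one, Polynomial.eval_zero, mul_one,
      mul_zero, intervalIntegral.integral_zero] at h
    simp only [Nat.add_eq_zero_iff, one_ne_zero, and_false, if_false, Nat.add_sub_cancel]
    linarith
  rw [hval]
  refine HasDerivAt.fun_sum fun i hi => ?_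
  have hi := Finset.mem_range.mp hi
  exact elem_hasDerivAt k a _ _ (hmono i hi).le
    (ha.mono (Set.Icc_subset_Icc (hlow i hi.le) (hup (M - (i + 1)) (i + 1) (by omega))))
    (u i) (hsm i hi) (hpoly i hi) t
end
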